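/- arXiv:math/0603294 — 5 statements merged into one kernel-verified Lean document; each statement's English description precedes it below -/
import Mathlib

section
/- Let u, u¹ : ℝ^M → M_Q(ℂ) be differentiable Q×Q-matrix-valued functions and let B^n, B^m be constant diagonal Q×Q complex matrices. Fix coordinates x_1, x_n, x_m among x = (x_1,…,x_M). If u satisfies the two N-wave-type equations ∂_{x_n}u − (∂_{x_1}u)B^n + u[B^n,u] = [B^n,u¹] and ∂_{x_m}u − (∂_{x_1}u)B^m + u[B^m,u] = [B^m,u¹], then eliminating u¹ yields the classical (2+1)-dimensional N-wave equation: [∂_{x_n}u, B^m] − [∂_{x_m}u, B^n] + B^m(∂_{x_1}u)B^n − B^n(∂_{x_1}u)B^m − [[u,B^m],[u,B^n]] = 0. -/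
open MeasureTheory Finset

/-- Entrywise partial derivative in the `k`-th coordinate direction of a
matrix-valued function on `ℝ^M`. -/
noncomputable def mpd {M Q : ℕ} (k : Fin M)
    (f : (Fin M → ℝ) → Matrix (Fin Q) (Fin Q) ℂ) (x : Fin M → ℝ) :
    Matrix (Fin Q) (Fin Q) ℂ :=
  Matrix.of fun a b => fderiv ℝ (fun y => f y a b) x (Pi.single k 1)

/-!
The elimination is purely algebraic. If `b` and `c` commute, then so do the derivations `⁅b, ·⁆` and
`⁅c, ·⁆`. Applying `⁅c, ·⁆` to the equation with right-hand side `⁅b, v⁆` and `⁅b, ·⁆` to the one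
with right-hand side `⁅c, v⁆` therefore makes the right-hand sides agree, and the Leibniz rule turns
the difference of the left-hand sides into the `N`-wave equation.
-/

theorem lie_lie_comm_of_lie_eq_zero {L M : Type*} [LieRing L] [AddCommGroup M] [LieRingModule L M]
    {x y : L} (h : ⁅x, y⁆ = 0) (m : M) : ⁅x, ⁅y, m⁆⁆ = ⁅y, ⁅x, m⁆⁆ := by
  rw [leibniz_lie, h, zero_lie, zero_add]

theorem lie_mul {R : Type*} [NonUnitalRing R] (c x y : R) :
    ⁅c, x * y⁆ = ⁅c, x⁆ * y + x * ⁅c, y⁆ := by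
  simp only [Ring.lie_def, sub_mul, mul_sub, mul_assoc, sub_add_sub_cancel]

theorem lie_mul_sub_lie_mul_of_commute {R : Type*} [NonUnitalRing R] {b c : R} (h : Commute b c)
    (d : R) : ⁅c, d * b⁆ - ⁅b, d * c⁆ = c * d * b - b * d * c := by
  have hdbc : d * b * c = d * c * b := by rw [mul_assoc, h.eq, ← mul_assoc]
  simp only [Ring.lie_def, ← mul_assoc, hdbc]
  abel

section Ring

variable {R : Type*} [Ring R]

attribute [local instance] LieRing.ofAssociativeRing

theorem lie_mul_lie_sub_lie_mul_lie_of_commute {b c : R} (h : Commute b c) (u : R) :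
    ⁅c, u * ⁅b, u⁆⁆ - ⁅b, u * ⁅c, u⁆⁆ = ⁅⁅u, c⁆, ⁅u, b⁆⁆ :=
  calc
    ⁅c, u * ⁅b, u⁆⁆ - ⁅b, u * ⁅c, u⁆⁆ = ⁅c, u⁆ * ⁅b, u⁆ - ⁅b, u⁆ * ⁅c, u⁆ := by
      rw [lie_mul, lie_mul, lie_lie_comm_of_lie_eq_zero h.lie_eq, add_sub_add_right_eq_sub]
    _ = ⁅⁅u, c⁆, ⁅u, b⁆⁆ := by
      rw [← lie_skew u c, ← lie_skew u b, neg_lie, lie_neg, neg_neg, Ring.lie_def ⁅c, u⁆]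

-- For the matrix equations, `d`, `p`, `q` are the values of `∂_{x_1}u`, `∂_{x_n}u`, `∂_{x_m}u` at a
-- point, `b = B^n`, `c = B^m` and `v = u¹`.
theorem stmt1_general {b c : R} (h : Commute b c) {d p q u v : R}
    (hp : p - d * b + u * ⁅b, u⁆ = ⁅b, v⁆) (hq : q - d * c + u * ⁅c, u⁆ = ⁅c, v⁆) :
    ⁅p, c⁆ - ⁅q, b⁆ + c * d * b - b * d * c - ⁅⁅u, c⁆, ⁅u, b⁆⁆ = 0 := by
  have lie_lhs_eq : ⁅c, p - d * b + u * ⁅b, u⁆⁆ = ⁅b, q - d * c + u * ⁅c, u⁆⁆ := by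
    rw [hp, hq, lie_lie_comm_of_lie_eq_zero h.lie_eq]
  calc
    ⁅p, c⁆ - ⁅q, b⁆ + c * d * b - b * d * c - ⁅⁅u, c⁆, ⁅u, b⁆⁆
      = ⁅p, c⁆ - ⁅q, b⁆ + (c * d * b - b * d * c) - ⁅⁅u, c⁆, ⁅u, b⁆⁆ := by rw [add_sub_assoc]
    _ = ⁅b, q - d * c + u * ⁅c, u⁆⁆ - ⁅c, p - d * b + u * ⁅b, u⁆⁆ := by
      rw [← lie_mul_sub_lie_mul_of_commute h, ← lie_mul_lie_sub_lie_mul_lie_of_commute h,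
        ← lie_skew p c, ← lie_skew q b]
      simp only [lie_add, lie_sub]
      abel
    _ = 0 := by rw [lie_lhs_eq, sub_self]

end Ring

/-- eliminating `u¹` from two `N`-wave-type equations yields the
classical (2+1)-dimensional `N`-wave equation.  The coordinates `x_1`, `x_n`,
`x_m` are the distinct indices `i1`, `inn`, `imm` of `Fin M`, and the constant
diagonal matrices `B^n`, `B^m` are `Matrix.diagonal Bn`, `Matrix.diagonal Bm`. -/
theorem stmt1 {M Q : ℕ} (i1 inn imm : Fin M)
    (h1n : i1 ≠ inn) (h1m : i1 ≠ imm) (hnm : inn ≠ imm)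
    (Bn Bm : Fin Q → ℂ)
    (u u1 : (Fin M → ℝ) → Matrix (Fin Q) (Fin Q) ℂ)
    (hud : ∀ a b, Differentiable ℝ fun x => u x a b)
    (hu1d : ∀ a b, Differentiable ℝ fun x => u1 x a b)
    (hn : ∀ x, mpd inn u x - mpd i1 u x * Matrix.diagonal Bn
        + u x * (Matrix.diagonal Bn * u x - u x * Matrix.diagonal Bn)
        = Matrix.diagonal Bn * u1 x - u1 x * Matrix.diagonal Bn)
    (hm : ∀ x, mpd imm u x - mpd i1 u x * Matrix.diagonal Bm
        + u x * (Matrix.diagonal Bm * u x - u x * Matrix.diagonal Bm)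
        = Matrix.diagonal Bm * u1 x - u1 x * Matrix.diagonal Bm) :
    ∀ x,
      (mpd inn u x * Matrix.diagonal Bm - Matrix.diagonal Bm * mpd inn u x)
        - (mpd imm u x * Matrix.diagonal Bn - Matrix.diagonal Bn * mpd imm u x)
        + Matrix.diagonal Bm * mpd i1 u x * Matrix.diagonal Bn
        - Matrix.diagonal Bn * mpd i1 u x * Matrix.diagonal Bm
        - ((u x * Matrix.diagonal Bm - Matrix.diagonal Bm * u x)
              * (u x * Matrix.diagonal Bn - Matrix.diagonal Bn * u x)
            - (u x * Matrix.diagonal Bn - Matrix.diagonal Bn * u x)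
              * (u x * Matrix.diagonal Bm - Matrix.diagonal Bm * u x))
        = 0 := by
  exact fun x => stmt1_general (Matrix.commute_diagonal Bn Bm) (hn x) (hm x)
end

section
/- Fix n with 1 < n ≤ M. Let Ψ(λ,ν;x), U(ν;x), C(ν;x), G^n(ν;x) be Q×Q-matrix-valued functions (ν ∈ ℝ^{M+1}, x ∈ ℝ^M), differentiable in x, let Φ(λ;x) be a diagonal Q×Q matrix with entries Φ_α(λ;x), let h^n_α(λ), g^n_{αγ}(ν) be scalar functions and B^n a constant diagonal matrix. Assume for all indices and all ν, x: (i) ∂_{x_n}Ψ_{αγ}(λ,ν;x) + (h^n_α(λ) + g^n_{αγ}(ν)) Ψ_{αγ}(λ,ν;x) = Φ_α(λ;x) B^n_α C_{αγ}(ν;x); (ii) ∂_{x_1}Ψ_{αγ}(λ,ν;x) = Φ_α(λ;x) C_{αγ}(ν;x); (iii) Φ_α(λ;x) δ_{αβ} = Σ_γ ∫ Ψ_{αγ}(λ,ν;x) U_{γβ}(ν;x) dν, and the x_1- and x_n-derivatives of this integral may be computed by differentiating under the integral sign; (iv) Φ_α satisfies ∂_{x_n}Φ_α + h^n_α Φ_α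 − B^n_α ∂_{x_1}Φ_α = 0; (v) u(x) = ∫ C(ν;x) U(ν;x) dν; (vi) Σ_γ ∫ Ψ_{αγ}(λ,ν;x) G^n_{γβ}(ν;x) dν = Σ_γ ∫ Ψ_{αγ}(λ,ν;x) g^n_{αγ}(ν) U_{γβ}(ν;x) dν; and all integrals involved converge absolutely. Then Σ_γ ∫ Ψ_{αγ}(λ,ν;x) (E_n)_{γβ}(ν;x) dν = 0 for all α, β, where E_n(ν;x) = ∂_{x_n}U(ν;x) − (∂_{x_1}U(ν;x)) B^n + U(ν;x)[B^n, u(x)] − G^n(ν;x). -/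
/-!
Write `Ψ * U = ∫ Ψ U dν`, `H = diag(h^n_α)` and `(Ψⁿ)_{αγ} = g^n_{αγ} Ψ_{αγ}`. Differentiating
`Φ = Ψ * U` along `x_1` and `x_n` and inserting the equations for `Ψ` gives
`∂₁Φ = Φ u + Ψ * ∂₁U` and `∂ₙΦ = Φ B u - H Φ - Ψⁿ * U + Ψ * ∂ₙU`.
Multiply the first by `B` from the right, subtract it from the second, and use `Φ = Ψ * U` once more
to write `Φ [B, u] = Ψ * (U [B, u])`. What remains is `Ψ * E_n = ∂ₙΦ + H Φ - (∂₁Φ) B`, which is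
zero by the equation for `Φ`, since the diagonal matrices `B` and `∂₁Φ` commute.
-/

open MeasureTheory Finset

/-- Partial derivative in the `k`-th coordinate direction of a complex-valued
function on `ℝ^M`. -/
noncomputable def pd {M : ℕ} (k : Fin M) (f : (Fin M → ℝ) → ℂ) (x : Fin M → ℝ) : ℂ :=
  fderiv ℝ f x (Pi.single k 1)

section MatrixIntegral

variable {Ω V 𝔸 l m n : Type*} [MeasurableSpace Ω] {μ : Measure Ω} [NormedAddCommGroup V]
  [NormedRing 𝔸]

/-- Entrywise integrability of a matrix-valued function. No norm on matrices is involved. -/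
def MatrixIntegrable (μ : Measure Ω) (F : Ω → Matrix m n V) : Prop :=
  ∀ i j, Integrable (fun ν => F ν i j) μ

theorem MatrixIntegrable.add {F G : Ω → Matrix m n V} (hF : MatrixIntegrable μ F)
    (hG : MatrixIntegrable μ G) : MatrixIntegrable μ fun ν => F ν + G ν :=
  fun i j => (hF i j).add (hG i j)

theorem MatrixIntegrable.sub {F G : Ω → Matrix m n V} (hF : MatrixIntegrable μ F)
    (hG : MatrixIntegrable μ G) : MatrixIntegrable μ fun ν => F ν - G ν :=
  fun i j => (hF i j).sub (hG i j)

theorem MatrixIntegrable.const_mul [Fintype m] {F : Ω → Matrix m n 𝔸}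
    (hF : MatrixIntegrable μ F) (K : Matrix l m 𝔸) : MatrixIntegrable μ fun ν => K * F ν :=
  fun i j => integrable_finsetSum _ fun k _ => (hF k j).const_mul (K i k)

theorem MatrixIntegrable.mul_const [Fintype n] {F : Ω → Matrix m n 𝔸}
    (hF : MatrixIntegrable μ F) (K : Matrix n l 𝔸) : MatrixIntegrable μ fun ν => F ν * K :=
  fun i j => integrable_finsetSum _ fun k _ => (hF i k).mul_const (K k j)

variable [NormedSpace ℝ V] [NormedAlgebra ℝ 𝔸]

/-- Entrywise Bochner integral of a matrix-valued function; the product `Ψ * U` of the dressing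
method is `matrixIntegral μ fun ν => Ψ ν * U ν`. An entry that is not integrable has integral
`0`. -/
noncomputable def matrixIntegral (μ : Measure Ω) (F : Ω → Matrix m n V) : Matrix m n V :=
  Matrix.of fun i j => ∫ ν, F ν i j ∂μ

theorem matrixIntegral_add {F G : Ω → Matrix m n V} (hF : MatrixIntegrable μ F)
    (hG : MatrixIntegrable μ G) :
    matrixIntegral μ (fun ν => F ν + G ν) = matrixIntegral μ F + matrixIntegral μ G := by
  ext i j
  exact integral_add (hF i j) (hG i j)

theorem matrixIntegral_sub {F G : Ω → Matrix m n V} (hF : MatrixIntegrable μ F)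
    (hG : MatrixIntegrable μ G) :
    matrixIntegral μ (fun ν => F ν - G ν) = matrixIntegral μ F - matrixIntegral μ G := by
  ext i j
  exact integral_sub (hF i j) (hG i j)

theorem matrixIntegral_const_mul [Fintype m] {F : Ω → Matrix m n 𝔸}
    (hF : MatrixIntegrable μ F) (K : Matrix l m 𝔸) :
    matrixIntegral μ (fun ν => K * F ν) = K * matrixIntegral μ F := by
  ext i j
  simp only [matrixIntegral, Matrix.of_apply, Matrix.mul_apply]
  rw [integral_finsetSum _ fun k _ => (hF k j).const_mul (K i k)]
  exact sum_congr rfl fun k _ => integral_const_mul_of_integrable (hF k j)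

theorem matrixIntegral_mul_const [Fintype n] {F : Ω → Matrix m n 𝔸}
    (hF : MatrixIntegrable μ F) (K : Matrix n l 𝔸) :
    matrixIntegral μ (fun ν => F ν * K) = matrixIntegral μ F * K := by
  ext i j
  simp only [matrixIntegral, Matrix.of_apply, Matrix.mul_apply]
  rw [integral_finsetSum _ fun k _ => (hF i k).mul_const (K k j)]
  exact sum_congr rfl fun k _ => integral_mul_const_of_integrable (hF i k)

end MatrixIntegral

section MatrixDeriv

variable {Ω E V 𝔸 l m n : Type*} [MeasurableSpace Ω] {μ : Measure Ω} [NormedAddCommGroup E]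
  [NormedSpace ℝ E] [NormedAddCommGroup V] [NormedSpace ℝ V] [NormedRing 𝔸] [NormedAlgebra ℝ 𝔸]

/-- Entrywise derivative of a matrix-valued function at `x` in the direction `v`. Each entry is
differentiated on its own, so one that is not differentiable contributes `0` and leaves the others
unaffected. -/
noncomputable def matrixDeriv (v : E) (F : E → Matrix m n V) (x : E) : Matrix m n V :=
  Matrix.of fun i j => fderiv ℝ (fun y => F y i j) x v

theorem matrixDeriv_diagonal [DecidableEq n] (v : E) (d : n → E → V) (x : E) :
    matrixDeriv v (fun y => Matrix.diagonal fun i => d i y) x =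
      Matrix.diagonal fun i => fderiv ℝ (d i) x v := by
  ext i j
  by_cases hij : i = j <;> simp [matrixDeriv, hij]

variable [Fintype m]

theorem sum_fderiv_mul {F : E → Matrix l m 𝔸} {G : E → Matrix m n 𝔸} {x : E}
    (hF : ∀ i k, DifferentiableAt ℝ (fun y => F y i k) x)
    (hG : ∀ k j, DifferentiableAt ℝ (fun y => G y k j) x) (v : E) (i : l) (j : n) :
    ∑ k, fderiv ℝ (fun y => F y i k * G y k j) x v =
      (matrixDeriv v F x * G x + F x * matrixDeriv v G x) i j := by
  simp only [Matrix.add_apply, Matrix.mul_apply, ← sum_add_distrib]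
  refine sum_congr rfl fun k _ => ?_
  rw [fderiv_fun_mul' (hF i k) (hG k j)]
  simp [matrixDeriv, add_comm]

theorem matrixDeriv_matrixIntegral_mul {Ψ : Ω → E → Matrix l m 𝔸} {U : Ω → E → Matrix m n 𝔸}
    {v x : E} (hΨ : ∀ ν i k, DifferentiableAt ℝ (fun y => Ψ ν y i k) x)
    (hU : ∀ ν k j, DifferentiableAt ℝ (fun y => U ν y k j) x)
    (hswap : ∀ i j, fderiv ℝ (fun y => ∫ ν, (Ψ ν y * U ν y) i j ∂μ) x v =
      ∫ ν, ∑ k, fderiv ℝ (fun y => Ψ ν y i k * U ν y k j) x v ∂μ)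
    (hiΨ : MatrixIntegrable μ fun ν => matrixDeriv v (Ψ ν) x * U ν x)
    (hiU : MatrixIntegrable μ fun ν => Ψ ν x * matrixDeriv v (U ν) x) :
    matrixDeriv v (fun y => matrixIntegral μ fun ν => Ψ ν y * U ν y) x =
      matrixIntegral μ (fun ν => matrixDeriv v (Ψ ν) x * U ν x) +
        matrixIntegral μ (fun ν => Ψ ν x * matrixDeriv v (U ν) x) := by
  rw [← matrixIntegral_add hiΨ hiU]
  ext i j
  refine (hswap i j).trans ?_
  simp only [sum_fderiv_mul (hΨ _) (hU _), matrixIntegral, Matrix.of_apply]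

end MatrixDeriv

section SpectralResidual

variable {Ω R 𝔸 l m n : Type*} [MeasurableSpace Ω] {μ : Measure Ω} [Ring R] [NormedRing 𝔸]
  [Fintype n]

/-- The matrix `E_n` whose vanishing is the spectral equation for `U`; the arguments `U₁` and `Uₙ`
stand for the derivatives of `U` along `x_1` and `x_n`. -/
def spectralResidual (B u : Matrix n n R) (U U₁ Uₙ G : Matrix m n R) : Matrix m n R :=
  Uₙ - U₁ * B + U * ⁅B, u⁆ - G

theorem spectralResidual_diagonal_apply [DecidableEq n] (b : n → R) (u : Matrix n n R)
    (U U₁ Uₙ G : Matrix m n R) (i : m) (j : n) :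
    spectralResidual (Matrix.diagonal b) u U U₁ Uₙ G i j =
      Uₙ i j - U₁ i j * b j + ∑ k, U i k * (b k * u k j - u k j * b j) - G i j := by
  simp [spectralResidual, Ring.lie_def, Matrix.mul_apply (M := U)]

variable [NormedAlgebra ℝ 𝔸] [Fintype m]

theorem matrixIntegral_mul_spectralResidual {Ψ : Ω → Matrix l m 𝔸} {U U₁ Uₙ G : Ω → Matrix m n 𝔸}
    (B u : Matrix n n 𝔸) (hU : MatrixIntegrable μ fun ν => Ψ ν * U ν)
    (hU₁ : MatrixIntegrable μ fun ν => Ψ ν * U₁ ν)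
    (hUₙ : MatrixIntegrable μ fun ν => Ψ ν * Uₙ ν)
    (hG : MatrixIntegrable μ fun ν => Ψ ν * G ν) :
    matrixIntegral μ (fun ν => Ψ ν * spectralResidual B u (U ν) (U₁ ν) (Uₙ ν) (G ν)) =
      spectralResidual B u (matrixIntegral μ fun ν => Ψ ν * U ν)
        (matrixIntegral μ fun ν => Ψ ν * U₁ ν) (matrixIntegral μ fun ν => Ψ ν * Uₙ ν)
        (matrixIntegral μ fun ν => Ψ ν * G ν) := by
  simp only [spectralResidual, Matrix.mul_sub, Matrix.mul_add, ← Matrix.mul_assoc]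
  have hU₁B := hU₁.mul_const B
  have hUcomm := hU.mul_const ⁅B, u⁆
  rw [matrixIntegral_sub ((hUₙ.sub hU₁B).add hUcomm) hG,
    matrixIntegral_add (hUₙ.sub hU₁B) hUcomm, matrixIntegral_sub hUₙ hU₁B,
    matrixIntegral_mul_const hU₁, matrixIntegral_mul_const hU]

variable [Fintype l]

theorem matrixIntegral_mul_of_dressing {Ψ Ψₙ Ψg : Ω → Matrix l m 𝔸} {U : Ω → Matrix m n 𝔸}
    {C : Ω → Matrix n m 𝔸} {Φ : Matrix l n 𝔸} {H : Matrix l l 𝔸} {B : Matrix n n 𝔸}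
    (hΨ : ∀ ν, Ψₙ ν + H * Ψ ν + Ψg ν = Φ * B * C ν)
    (hC : MatrixIntegrable μ fun ν => C ν * U ν) (hU : MatrixIntegrable μ fun ν => Ψ ν * U ν)
    (hg : MatrixIntegrable μ fun ν => Ψg ν * U ν) :
    matrixIntegral μ (fun ν => Ψₙ ν * U ν) =
      Φ * B * matrixIntegral μ (fun ν => C ν * U ν) -
        H * matrixIntegral μ (fun ν => Ψ ν * U ν) - matrixIntegral μ (fun ν => Ψg ν * U ν) := by
  have hΨₙ (ν) : Ψₙ ν * U ν = Φ * B * (C ν * U ν) - H * (Ψ ν * U ν) - Ψg ν * U ν := by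
    rw [← Matrix.mul_assoc, ← Matrix.mul_assoc, ← hΨ, ← Matrix.sub_mul, ← Matrix.sub_mul]
    congr 1
    abel
  simp only [hΨₙ]
  rw [matrixIntegral_sub ((hC.const_mul _).sub (hU.const_mul _)) hg,
    matrixIntegral_sub (hC.const_mul _) (hU.const_mul _), matrixIntegral_const_mul hC,
    matrixIntegral_const_mul hU]

theorem matrixIntegral_mul_spectralResidual_eq_zero {Ψ Ψ₁ Ψₙ Ψg : Ω → Matrix l m 𝔸}
    {U U₁ Uₙ G : Ω → Matrix m n 𝔸} {C : Ω → Matrix n m 𝔸} {Φ Φ₁ Φₙ : Matrix l n 𝔸}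
    {H : Matrix l l 𝔸} {B u : Matrix n n 𝔸}
    (hΨₙ : ∀ ν, Ψₙ ν + H * Ψ ν + Ψg ν = Φ * B * C ν) (hΨ₁ : ∀ ν, Ψ₁ ν = Φ * C ν)
    (hΦ : Φ = matrixIntegral μ fun ν => Ψ ν * U ν)
    (hΦ₁ : Φ₁ = matrixIntegral μ (fun ν => Ψ₁ ν * U ν) + matrixIntegral μ fun ν => Ψ ν * U₁ ν)
    (hΦₙ : Φₙ = matrixIntegral μ (fun ν => Ψₙ ν * U ν) + matrixIntegral μ fun ν => Ψ ν * Uₙ ν)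
    (hΦeq : Φₙ + H * Φ - Φ₁ * B = 0) (hu : u = matrixIntegral μ fun ν => C ν * U ν)
    (hG : matrixIntegral μ (fun ν => Ψ ν * G ν) = matrixIntegral μ fun ν => Ψg ν * U ν)
    (hiU : MatrixIntegrable μ fun ν => Ψ ν * U ν)
    (hiG : MatrixIntegrable μ fun ν => Ψ ν * G ν)
    (hig : MatrixIntegrable μ fun ν => Ψg ν * U ν)
    (hiC : MatrixIntegrable μ fun ν => C ν * U ν)
    (hiU₁ : MatrixIntegrable μ fun ν => Ψ ν * U₁ ν)
    (hiUₙ : MatrixIntegrable μ fun ν => Ψ ν * Uₙ ν) :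
    matrixIntegral μ (fun ν => Ψ ν * spectralResidual B u (U ν) (U₁ ν) (Uₙ ν) (G ν)) = 0 := by
  have hΨ₁U : matrixIntegral μ (fun ν => Ψ₁ ν * U ν) = Φ * u := by
    simp only [hΨ₁, Matrix.mul_assoc, hu, matrixIntegral_const_mul hiC]
  have hΨₙU := matrixIntegral_mul_of_dressing hΨₙ hiC hiU hig
  rw [← hu, ← hΦ] at hΨₙU
  have hΨU₁ : matrixIntegral μ (fun ν => Ψ ν * U₁ ν) = Φ₁ - Φ * u := by
    rw [hΦ₁, hΨ₁U, add_sub_cancel_left]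
  have hΨUₙ : matrixIntegral μ (fun ν => Ψ ν * Uₙ ν) =
      Φₙ - (Φ * B * u - H * Φ - matrixIntegral μ fun ν => Ψg ν * U ν) := by
    rw [hΦₙ, hΨₙU, add_sub_cancel_left]
  calc matrixIntegral μ (fun ν => Ψ ν * spectralResidual B u (U ν) (U₁ ν) (Uₙ ν) (G ν))
      = Φₙ + H * Φ - Φ₁ * B := by
        rw [matrixIntegral_mul_spectralResidual B u hiU hiU₁ hiUₙ hiG, ← hΦ, hΨU₁, hΨUₙ, hG,
          spectralResidual, Ring.lie_def]
        simp only [Matrix.sub_mul, Matrix.mul_sub, ← Matrix.mul_assoc]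
        abel
    _ = 0 := hΦeq

end SpectralResidual

open scoped Matrix in
theorem stmt5_general {Ω E 𝕜 ι : Type*} [MeasurableSpace Ω] {μ : Measure Ω}
    [NormedAddCommGroup E] [NormedSpace ℝ E] [RCLike 𝕜] [Fintype ι] [DecidableEq ι] (v w : E)
    (Ψ U C G : Ω → E → Matrix ι ι 𝕜) (Φ : ι → E → 𝕜) (h : ι → 𝕜) (g : Ω → Matrix ι ι 𝕜)
    (B : ι → 𝕜) (u : E → Matrix ι ι 𝕜)
    (hΨd : ∀ α γ ν, Differentiable ℝ fun x => Ψ ν x α γ)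
    (hUd : ∀ γ β ν, Differentiable ℝ fun x => U ν x γ β)
    (hΨw : ∀ α γ ν x, fderiv ℝ (fun y => Ψ ν y α γ) x w + (h α + g ν α γ) * Ψ ν x α γ =
      Φ α x * B α * C ν x α γ)
    (hΨv : ∀ α γ ν x, fderiv ℝ (fun y => Ψ ν y α γ) x v = Φ α x * C ν x α γ)
    (hΦ : ∀ α β x, Φ α x * (if α = β then 1 else 0) = ∫ ν, (Ψ ν x * U ν x) α β ∂μ)
    (hswapv : ∀ α β x, fderiv ℝ (fun y => ∫ ν, (Ψ ν y * U ν y) α β ∂μ) x v =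
      ∫ ν, ∑ γ, fderiv ℝ (fun y => Ψ ν y α γ * U ν y γ β) x v ∂μ)
    (hswapw : ∀ α β x, fderiv ℝ (fun y => ∫ ν, (Ψ ν y * U ν y) α β ∂μ) x w =
      ∫ ν, ∑ γ, fderiv ℝ (fun y => Ψ ν y α γ * U ν y γ β) x w ∂μ)
    (hΦeq : ∀ α x, fderiv ℝ (Φ α) x w + h α * Φ α x - B α * fderiv ℝ (Φ α) x v = 0)
    (hu : ∀ α β x, u x α β = ∫ ν, (C ν x * U ν x) α β ∂μ)
    (hG : ∀ α β x, ∫ ν, (Ψ ν x * G ν x) α β ∂μ = ∫ ν, ((Ψ ν x ⊙ g ν) * U ν x) α β ∂μ)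
    (hiU : ∀ α β x, Integrable (fun ν => (Ψ ν x * U ν x) α β) μ)
    (hiG : ∀ α β x, Integrable (fun ν => (Ψ ν x * G ν x) α β) μ)
    (hig : ∀ α β x, Integrable (fun ν => ((Ψ ν x ⊙ g ν) * U ν x) α β) μ)
    (hiC : ∀ α β x, Integrable (fun ν => (C ν x * U ν x) α β) μ)
    (hiUv : ∀ α β x, Integrable (fun ν => (Ψ ν x * matrixDeriv v (U ν) x) α β) μ)
    (hiUw : ∀ α β x, Integrable (fun ν => (Ψ ν x * matrixDeriv w (U ν) x) α β) μ)
    (hiΨv : ∀ α β x, Integrable (fun ν => (matrixDeriv v (Ψ ν) x * U ν x) α β) μ)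
    (hiΨw : ∀ α β x, Integrable (fun ν => (matrixDeriv w (Ψ ν) x * U ν x) α β) μ)
    (α β : ι) (x : E) :
    ∫ ν, ∑ γ, Ψ ν x α γ * (fderiv ℝ (fun y => U ν y γ β) x w -
      fderiv ℝ (fun y => U ν y γ β) x v * B β +
      ∑ δ, U ν x γ δ * (B δ * u x δ β - u x δ β * B β) - G ν x γ β) ∂μ = 0 := by
  have hΦ_int (y) : Matrix.diagonal (fun α => Φ α y) =
      matrixIntegral μ fun ν => Ψ ν y * U ν y := by
    ext α β
    simpa [Matrix.diagonal_apply, matrixIntegral] using hΦ α β y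
  have hΦ_deriv (e) := matrixDeriv_diagonal e Φ x
  simp only [hΦ_int] at hΦ_deriv
  have hΦv := (hΦ_deriv v).symm.trans <| matrixDeriv_matrixIntegral_mul
    (fun ν α γ => hΨd α γ ν x) (fun ν γ β => hUd γ β ν x) (fun α β => hswapv α β x)
    (fun α β => hiΨv α β x) (fun α β => hiUv α β x)
  have hΦw := (hΦ_deriv w).symm.trans <| matrixDeriv_matrixIntegral_mul
    (fun ν α γ => hΨd α γ ν x) (fun ν γ β => hUd γ β ν x) (fun α β => hswapw α β x)
    (fun α β => hiΨw α β x) (fun α β => hiUw α β x)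
  have hΨw_mat (ν) : matrixDeriv w (Ψ ν) x + Matrix.diagonal h * Ψ ν x + Ψ ν x ⊙ g ν =
      Matrix.diagonal (fun α => Φ α x) * Matrix.diagonal B * C ν x := by
    ext α γ
    simp only [matrixDeriv, Matrix.add_apply, Matrix.of_apply, Matrix.diagonal_mul,
      Matrix.hadamard_apply, Matrix.diagonal_mul_diagonal, ← hΨw]
    ring
  have hΨv_mat (ν) : matrixDeriv v (Ψ ν) x = Matrix.diagonal (fun α => Φ α x) * C ν x := by
    ext α γ
    simp [matrixDeriv, hΨv]
  have hΦeq_mat : Matrix.diagonal (fun α => fderiv ℝ (Φ α) x w) +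
      Matrix.diagonal h * Matrix.diagonal (fun α => Φ α x) -
      Matrix.diagonal (fun α => fderiv ℝ (Φ α) x v) * Matrix.diagonal B = 0 := by
    simp [Matrix.diagonal_mul_diagonal, Matrix.diagonal_add, Matrix.diagonal_sub, mul_comm _ (B _),
      hΦeq]
  have hres := matrixIntegral_mul_spectralResidual_eq_zero hΨw_mat hΨv_mat (hΦ_int x) hΦv hΦw
    hΦeq_mat (Matrix.ext fun α β => hu α β x) (Matrix.ext fun α β => hG α β x)
    (fun α β => hiU α β x) (fun α β => hiG α β x) (fun α β => hig α β x) (fun α β => hiC α β x)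
    (fun α β => hiUv α β x) (fun α β => hiUw α β x)
  simpa only [matrixIntegral, Matrix.of_apply, Matrix.mul_apply, spectralResidual_diagonal_apply,
    Matrix.zero_apply, matrixDeriv] using congrFun₂ hres α β

/-- the dressing-method derivation of the spectral equations
`Ψ * E_n = 0`.  Coordinates of `x ∈ ℝ^M` are indexed by `Fin (M+2)` (index `0`
is `x_1`, the index `n ≠ 0` is `x_n` with `1 < n ≤ M`); spectral parameters
`ν ∈ ℝ^{M+1}` are indexed by `Fin (M+3)` and `∫ … ∂ν` is the Lebesgue integral
over `Fin (M+3) → ℝ`.  Matrices are handled entrywise: `Ψ α γ ν x` is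
`Ψ_{αγ}(λ,ν;x)` (the fixed spectral parameter `λ` is suppressed), and the
scalars `hh α = h^n_α(λ)`, `gg α γ ν = g^n_{αγ}(ν)`, `B α = B^n_α`. -/
theorem stmt5 {M Q : ℕ} (n : Fin (M + 2)) (hn0 : n ≠ 0)
    (Ψ U C G : Fin Q → Fin Q → (Fin (M + 3) → ℝ) → (Fin (M + 2) → ℝ) → ℂ)
    (Φ : Fin Q → (Fin (M + 2) → ℝ) → ℂ)
    (hh : Fin Q → ℂ) (gg : Fin Q → Fin Q → (Fin (M + 3) → ℝ) → ℂ) (B : Fin Q → ℂ)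
    (u : Fin Q → Fin Q → (Fin (M + 2) → ℝ) → ℂ)
    (hΨd : ∀ α γ ν, Differentiable ℝ (Ψ α γ ν))
    (hUd : ∀ γ β ν, Differentiable ℝ (U γ β ν))
    -- (i) the x_n-equation for the dressing kernel Ψ
    (h1 : ∀ α γ ν x, pd n (Ψ α γ ν) x + (hh α + gg α γ ν) * Ψ α γ ν x
        = Φ α x * B α * C α γ ν x)
    -- (ii) the x_1-equation for the dressing kernel Ψ
    (h2 : ∀ α γ ν x, pd 0 (Ψ α γ ν) x = Φ α x * C α γ ν x)
    -- (iii) Φ δ_{αβ} = Ψ * U, with derivatives computable under the integral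
    (h3 : ∀ α β x, Φ α x * (if α = β then 1 else 0)
        = ∫ ν, ∑ γ, Ψ α γ ν x * U γ β ν x)
    (h3swap : ∀ k : Fin (M + 2), (k = 0 ∨ k = n) → ∀ α β x,
        pd k (fun y => ∫ ν, ∑ γ, Ψ α γ ν y * U γ β ν y) x
          = ∫ ν, ∑ γ, pd k (fun y => Ψ α γ ν y * U γ β ν y) x)
    -- (iv) the equation for Φ
    (h4 : ∀ α x, pd n (Φ α) x + hh α * Φ α x - B α * pd 0 (Φ α) x = 0)
    -- (v) the field u = C * U
    (h5 : ∀ δ ε x, u δ ε x = ∫ ν, ∑ γ, C δ γ ν x * U γ ε ν x)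
    -- (vi) Ψ * G^n = Ψ^n * U
    (h6 : ∀ α β x, (∫ ν, ∑ γ, Ψ α γ ν x * G γ β ν x)
        = ∫ ν, ∑ γ, Ψ α γ ν x * gg α γ ν * U γ β ν x)
    -- absolute convergence of all integrals involved
    (hi1 : ∀ α β x, Integrable fun ν => ∑ γ, Ψ α γ ν x * U γ β ν x)
    (hi2 : ∀ α β x, Integrable fun ν => ∑ γ, Ψ α γ ν x * G γ β ν x)
    (hi3 : ∀ α β x, Integrable fun ν => ∑ γ, Ψ α γ ν x * gg α γ ν * U γ β ν x)
    (hi4 : ∀ α β x, Integrable fun ν => ∑ γ, C α γ ν x * U γ β ν x)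
    (hi5 : ∀ (k : Fin (M + 2)) α β x,
      Integrable fun ν => ∑ γ, Ψ α γ ν x * pd k (U γ β ν) x)
    (hi6 : ∀ (k : Fin (M + 2)) α β x,
      Integrable fun ν => ∑ γ, pd k (Ψ α γ ν) x * U γ β ν x) :
    -- conclusion: Ψ * E_n = 0
    ∀ α β x,
      (∫ ν, ∑ γ, Ψ α γ ν x *
        (pd n (U γ β ν) x - pd 0 (U γ β ν) x * B β
          + (∑ δ, U γ δ ν x * (B δ * u δ β x - u δ β x * B β))
          - G γ β ν x)) = 0 := by
  exact stmt5_general (Pi.single 0 1) (Pi.single n 1) (fun ν x => .of fun α γ => Ψ α γ ν x)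
    (fun ν x => .of fun γ β => U γ β ν x) (fun ν x => .of fun α γ => C α γ ν x)
    (fun ν x => .of fun γ β => G γ β ν x) Φ hh (fun ν => .of fun α γ => gg α γ ν) B
    (fun x => .of fun α β => u α β x) hΨd hUd h1 h2 h3 (h3swap 0 (.inl rfl))
    (h3swap n (.inr rfl)) h4 h5 h6 hi1 hi2 hi3 hi4 (hi5 0) (hi5 n) (hi6 0) (hi6 n)
end

section
/- Fix n with 1 < n ≤ M. Let C(ν;x), U(ν;x), G^n(ν;x) be Q×Q-matrix-valued functions (ν ∈ ℝ^{M+1}, x ∈ ℝ^M), differentiable in x, let g^n_{αβ}(ν) be scalar functions and B^n a constant diagonal Q×Q matrix. Define u(x) = ∫ C(ν;x)U(ν;x) dν and u¹(x) = ∫ (∂_{x_1}C(ν;x)) U(ν;x) dν, and assume x-derivatives of these integrals may be computed under the integral sign and all integrals converge absolutely. Assume C satisfies entrywise ∂_{x_n}C_{αβ} + g^n_{αβ}(ν) C_{αβ} − B^n_α ∂_{x_1}C_{αβ} = 0, and U satisfies pointwise in ν the spectral equation ∂_{x_n}U − (∂_{x_1}U)B^n + U[B^n,u] − G^n = 0.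 Then u satisfies ∂_{x_n}u − (∂_{x_1}u)B^n + u[B^n,u] = [B^n, u¹] − ∫ C^{1n}(ν;x) U(ν;x) dν + ∫ C(ν;x) G^n(ν;x) dν, where C^{1n}_{αβ}(ν;x) = C_{αβ}(ν;x) g^n_{αβ}(ν). -/
/-!
For fixed `ν`, the Leibniz rule and the two linear equations give
`∂ₙ(CU) = (∂₁(CU))Bⁿ - CU[Bⁿ, u] + [Bⁿ, (∂₁C)U] - C¹ⁿU + CGⁿ`:
the terms `C(∂₁U)Bⁿ` and `Bⁿ(∂₁C)U` are completed to `(∂₁(CU))Bⁿ` and to a commutator by adding and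
subtracting `(∂₁C)UBⁿ`. Since `Bⁿ` and `u` do not depend on `ν`, integrating over `ν` gives the
nonlinear equation.
-/

open MeasureTheory Finset

section EntryIntegral

variable {Ω m n p A : Type*} [MeasurableSpace Ω] {μ : Measure Ω} [NormedRing A] [NormedAlgebra ℝ A]
  {F F' : Ω → Matrix m n A} {I I' : Matrix m n A}

/-- The integral of a matrix-valued function, taken entry by entry: `F` converges absolutely to `I`.
Convergence and value are stated together because `∫` is `0` on non-integrable functions, and
entrywise because `Matrix` carries no canonical norm. -/
def HasEntryIntegral (μ : Measure Ω) (F : Ω → Matrix m n A) (I : Matrix m n A) : Prop :=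
  ∀ i j, Integrable (fun ν => F ν i j) μ ∧ ∫ ν, F ν i j ∂μ = I i j

namespace HasEntryIntegral

theorem of_integrable (h : ∀ i j, Integrable (fun ν => F ν i j) μ) :
    HasEntryIntegral μ F (.of fun i j => ∫ ν, F ν i j ∂μ) :=
  fun i j => ⟨h i j, rfl⟩

theorem unique (h : HasEntryIntegral μ F I) (h' : HasEntryIntegral μ F I') : I = I' :=
  Matrix.ext fun i j => (h i j).2.symm.trans (h' i j).2

theorem add (h : HasEntryIntegral μ F I) (h' : HasEntryIntegral μ F' I') :
    HasEntryIntegral μ (fun ν => F ν + F' ν) (I + I') := fun i j =>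
  ⟨(h i j).1.add (h' i j).1,
    (integral_add (h i j).1 (h' i j).1).trans (congrArg₂ _ (h i j).2 (h' i j).2)⟩

theorem sub (h : HasEntryIntegral μ F I) (h' : HasEntryIntegral μ F' I') :
    HasEntryIntegral μ (fun ν => F ν - F' ν) (I - I') := fun i j =>
  ⟨(h i j).1.sub (h' i j).1,
    (integral_sub (h i j).1 (h' i j).1).trans (congrArg₂ _ (h i j).2 (h' i j).2)⟩

theorem const_mul [Fintype m] (h : HasEntryIntegral μ F I) (B : Matrix p m A) :
    HasEntryIntegral μ (fun ν => B * F ν) (B * I) := by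
  intro i j
  have hint : ∀ k ∈ univ, Integrable (fun ν => B i k * F ν k j) μ :=
    fun k _ => (h k j).1.const_mul (B i k)
  refine ⟨integrable_finsetSum _ hint, (integral_finsetSum _ hint).trans ?_⟩
  exact sum_congr rfl fun k _ => by
    rw [integral_const_mul_of_integrable (h k j).1, (h k j).2]

theorem mul_const [Fintype n] (h : HasEntryIntegral μ F I) (B : Matrix n p A) :
    HasEntryIntegral μ (fun ν => F ν * B) (I * B) := by
  intro i j
  have hint : ∀ k ∈ univ, Integrable (fun ν => F ν i k * B k j) μ :=
    fun k _ => (h i k).1.mul_const (B k j)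
  refine ⟨integrable_finsetSum _ hint, (integral_finsetSum _ hint).trans ?_⟩
  exact sum_congr rfl fun k _ => by
    rw [integral_mul_const_of_integrable (h i k).1, (h i k).2]

theorem const_lie [Fintype m] {F : Ω → Matrix m m A} {I : Matrix m m A}
    (h : HasEntryIntegral μ F I) (B : Matrix m m A) :
    HasEntryIntegral μ (fun ν => ⁅B, F ν⁆) ⁅B, I⁆ :=
  (h.const_mul B).sub (h.mul_const B)

end HasEntryIntegral

end EntryIntegral

section EntryDeriv

variable {E m n p A : Type*} [NormedAddCommGroup E] [NormedSpace ℝ E] [NormedRing A]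
  [NormedAlgebra ℝ A]

/-- The derivative at `x` in the direction `v` of a matrix-valued function. As it is taken entry by
entry, an entry that is not differentiable at `x` contributes `0` without affecting the others. -/
noncomputable def entryDeriv (v : E) (F : E → Matrix m n A) (x : E) : Matrix m n A :=
  Matrix.of fun i j => fderiv ℝ (fun y => F y i j) x v

variable [Fintype n] {F : E → Matrix m n A} {F' : E → Matrix n p A} {x : E}

theorem entryDeriv_mul_apply (hF : ∀ i j, DifferentiableAt ℝ (fun y => F y i j) x)
    (hF' : ∀ i j, DifferentiableAt ℝ (fun y => F' y i j) x) (v : E) (i : m) (j : p) :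
    entryDeriv v (fun y => F y * F' y) x i j
      = ∑ k, fderiv ℝ (fun y => F y i k * F' y k j) x v := by
  simp only [entryDeriv, Matrix.of_apply, Matrix.mul_apply]
  rw [fderiv_fun_sum fun k _ => (hF i k).fun_mul (hF' k j), _root_.sum_apply]

theorem entryDeriv_mul (hF : ∀ i j, DifferentiableAt ℝ (fun y => F y i j) x)
    (hF' : ∀ i j, DifferentiableAt ℝ (fun y => F' y i j) x) (v : E) :
    entryDeriv v (fun y => F y * F' y) x = entryDeriv v F x * F' x + F x * entryDeriv v F' x := by
  ext i j
  rw [entryDeriv_mul_apply hF hF', Matrix.add_apply, Matrix.mul_apply, Matrix.mul_apply,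
    ← sum_add_distrib]
  refine sum_congr rfl fun k _ => ?_
  rw [fderiv_fun_mul' (hF i k) (hF' k j)]
  simp [entryDeriv, add_comm]

theorem hasEntryIntegral_entryDeriv_mul {Ω : Type*} [MeasurableSpace Ω] {μ : Measure Ω}
    {F : Ω → E → Matrix m n A} {F' : Ω → E → Matrix n p A} {D : Matrix m p A} {v : E}
    (hF : ∀ ν i j, DifferentiableAt ℝ (fun y => F ν y i j) x)
    (hF' : ∀ ν i j, DifferentiableAt ℝ (fun y => F' ν y i j) x)
    (hint : ∀ i j, Integrable (fun ν => (entryDeriv v (F ν) x * F' ν x) i j) μ)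
    (hint' : ∀ i j, Integrable (fun ν => (F ν x * entryDeriv v (F' ν) x) i j) μ)
    (hD : ∀ i j, D i j = ∫ ν, ∑ k, fderiv ℝ (fun y => F ν y i k * F' ν y k j) x v ∂μ) :
    HasEntryIntegral μ (fun ν => entryDeriv v (fun y => F ν y * F' ν y) x) D := by
  refine fun i j => ⟨?_, ?_⟩
  · simp only [entryDeriv_mul (hF _) (hF' _), Matrix.add_apply]
    exact (hint i j).add (hint' i j)
  · simp only [entryDeriv_mul_apply (hF _) (hF' _), hD]

end EntryDeriv

section Dressing

variable {Ω E ι κ A : Type*} [MeasurableSpace Ω] {μ : Measure Ω} [NormedAddCommGroup E]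
  [NormedSpace ℝ E] [Fintype ι] [Fintype κ] [NormedRing A] [NormedAlgebra ℝ A]

theorem entryDeriv_mul_of_dressing_of_spectral {C : E → Matrix ι κ A} {U : E → Matrix κ ι A}
    {K : Matrix ι κ A} {G : Matrix κ ι A} {B u : Matrix ι ι A} {v w x : E}
    (hCd : ∀ i k, DifferentiableAt ℝ (fun y => C y i k) x)
    (hUd : ∀ k i, DifferentiableAt ℝ (fun y => U y k i) x)
    (hC : entryDeriv v C x + K - B * entryDeriv w C x = 0)
    (hU : entryDeriv v U x - entryDeriv w U x * B + U x * ⁅B, u⁆ - G = 0) :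
    entryDeriv v (fun y => C y * U y) x
      = entryDeriv w (fun y => C y * U y) x * B - C x * U x * ⁅B, u⁆
        + ⁅B, entryDeriv w C x * U x⁆ - K * U x + C x * G := by
  have hC' : entryDeriv v C x = B * entryDeriv w C x - K :=
    eq_sub_of_add_eq (sub_eq_zero.1 hC)
  have hU' : entryDeriv v U x = G + entryDeriv w U x * B - U x * ⁅B, u⁆ := by
    rw [← sub_eq_zero.1 hU]; abel
  rw [entryDeriv_mul hCd hUd, entryDeriv_mul hCd hUd, hC', hU', Ring.lie_def B (_ * _)]
  simp only [Matrix.mul_add, Matrix.add_mul, Matrix.mul_sub, Matrix.sub_mul, Matrix.mul_assoc]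
  abel

/-- In the paper's notation `v` and `w` are the directions of `xₙ` and `x₁`, and `K` is `C¹ⁿ`. -/
theorem stmt6_general {C : Ω → E → Matrix ι κ A} {U : Ω → E → Matrix κ ι A}
    {K : Ω → Matrix ι κ A} {G : Ω → Matrix κ ι A} {B : Matrix ι ι A}
    {u : E → Matrix ι ι A} {u₁ IK IG : Matrix ι ι A} {v w x : E}
    (hCd : ∀ ν i k, DifferentiableAt ℝ (fun y => C ν y i k) x)
    (hUd : ∀ ν k i, DifferentiableAt ℝ (fun y => U ν y k i) x)
    (hu : HasEntryIntegral μ (fun ν => C ν x * U ν x) (u x))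
    (hu₁ : HasEntryIntegral μ (fun ν => entryDeriv w (C ν) x * U ν x) u₁)
    (hK : HasEntryIntegral μ (fun ν => K ν * U ν x) IK)
    (hG : HasEntryIntegral μ (fun ν => C ν x * G ν) IG)
    (hv : HasEntryIntegral μ (fun ν => entryDeriv v (fun y => C ν y * U ν y) x) (entryDeriv v u x))
    (hw : HasEntryIntegral μ (fun ν => entryDeriv w (fun y => C ν y * U ν y) x) (entryDeriv w u x))
    (hC : ∀ ν, entryDeriv v (C ν) x + K ν - B * entryDeriv w (C ν) x = 0)
    (hU : ∀ ν, entryDeriv v (U ν) x - entryDeriv w (U ν) x * B + U ν x * ⁅B, u x⁆ - G ν = 0) :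
    entryDeriv v u x - entryDeriv w u x * B + u x * ⁅B, u x⁆ = ⁅B, u₁⁆ - IK + IG := by
  have hrhs :=
    ((((hw.mul_const B).sub (hu.mul_const ⁅B, u x⁆)).add (hu₁.const_lie B)).sub hK).add hG
  simp only [← entryDeriv_mul_of_dressing_of_spectral (hCd _) (hUd _) (hC _) (hU _)] at hrhs
  rw [hv.unique hrhs]
  abel

end Dressing

section Diagonal

variable {m n A : Type*} [Fintype n] [DecidableEq n] [Ring A]

theorem lie_diagonal_apply (b : n → A) (F : Matrix n n A) (i j : n) :
    ⁅Matrix.diagonal b, F⁆ i j = b i * F i j - F i j * b j := by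
  rw [Ring.lie_def, Matrix.sub_apply, Matrix.diagonal_mul, Matrix.mul_diagonal]

theorem spectral_diagonal_apply (b : n → A) (X Y W : Matrix m n A) (F : Matrix n n A) (i : m)
    (j : n) :
    (X - Y * Matrix.diagonal b + W * ⁅Matrix.diagonal b, F⁆) i j
      = X i j - Y i j * b j + ∑ k, W i k * (b k * F k j - F k j * b j) := by
  simp only [Matrix.add_apply, Matrix.sub_apply, Matrix.mul_diagonal, Matrix.mul_apply (M := W),
    lie_diagonal_apply]

theorem spectral_diagonal_iff {b : n → A} {X Y W G : Matrix m n A} {F : Matrix n n A} :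
    X - Y * Matrix.diagonal b + W * ⁅Matrix.diagonal b, F⁆ - G = 0 ↔
      ∀ i j, X i j - Y i j * b j + ∑ k, W i k * (b k * F k j - F k j * b j) - G i j = 0 := by
  simp only [← Matrix.ext_iff, Matrix.sub_apply _ G, spectral_diagonal_apply, Matrix.zero_apply]

theorem dressing_diagonal_iff {b : n → A} {X Y K : Matrix n m A} :
    X + K - Matrix.diagonal b * Y = 0 ↔ ∀ i j, X i j + K i j - b i * Y i j = 0 := by
  simp only [← Matrix.ext_iff, Matrix.sub_apply, Matrix.add_apply, Matrix.diagonal_mul,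
    Matrix.zero_apply]

theorem nwave_diagonal_iff {b : n → A} {X Y W V IK IG F : Matrix n n A} :
    X - Y * Matrix.diagonal b + W * ⁅Matrix.diagonal b, F⁆
        = ⁅Matrix.diagonal b, V⁆ - IK + IG ↔
      ∀ i j, X i j - Y i j * b j + ∑ k, W i k * (b k * F k j - F k j * b j)
        = b i * V i j - V i j * b j - IK i j + IG i j := by
  simp only [← Matrix.ext_iff, spectral_diagonal_apply, Matrix.add_apply _ IG,
    Matrix.sub_apply _ IK, lie_diagonal_apply]

end Diagonal

/-- applying the dressing function `C` to the spectral equation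
yields the `N`-wave-type nonlinear equation for the field `u`.  Coordinates are
indexed by `Fin (M+2)` (index `0` is `x_1`, index `n ≠ 0` is `x_n`); spectral
parameters `ν ∈ ℝ^{M+1}` by `Fin (M+3)`.  Matrices are entrywise:
`g α β ν = g^n_{αβ}(ν)` and `B α = B^n_α` (`B^n` diagonal). -/
theorem stmt6 {M Q : ℕ} (n : Fin (M + 2)) (hn0 : n ≠ 0)
    (C U G : Fin Q → Fin Q → (Fin (M + 3) → ℝ) → (Fin (M + 2) → ℝ) → ℂ)
    (g : Fin Q → Fin Q → (Fin (M + 3) → ℝ) → ℂ) (B : Fin Q → ℂ)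
    (hCd : ∀ α γ ν, Differentiable ℝ (C α γ ν))
    (hUd : ∀ γ β ν, Differentiable ℝ (U γ β ν))
    (hGd : ∀ γ β ν, Differentiable ℝ (G γ β ν))
    (u u1 : Fin Q → Fin Q → (Fin (M + 2) → ℝ) → ℂ)
    (hu : ∀ α β x, u α β x = ∫ ν, ∑ γ, C α γ ν x * U γ β ν x)
    (hu1 : ∀ α β x, u1 α β x = ∫ ν, ∑ γ, pd 0 (C α γ ν) x * U γ β ν x)
    -- absolute convergence of all integrals involved
    (hiu : ∀ α β x, Integrable fun ν => ∑ γ, C α γ ν x * U γ β ν x)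
    (hiu1 : ∀ α β x, Integrable fun ν => ∑ γ, pd 0 (C α γ ν) x * U γ β ν x)
    (hiG : ∀ α β x, Integrable fun ν => ∑ γ, C α γ ν x * G γ β ν x)
    (hig : ∀ α β x, Integrable fun ν => ∑ γ, C α γ ν x * g α γ ν * U γ β ν x)
    (hiCU : ∀ (k : Fin (M + 2)) α β x,
      Integrable fun ν => ∑ γ, pd k (C α γ ν) x * U γ β ν x)
    (hiCU' : ∀ (k : Fin (M + 2)) α β x,
      Integrable fun ν => ∑ γ, C α γ ν x * pd k (U γ β ν) x)
    -- derivatives of u may be computed under the integral sign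
    (hswap : ∀ (k : Fin (M + 2)) α β x,
      pd k (u α β) x = ∫ ν, ∑ γ, pd k (fun y => C α γ ν y * U γ β ν y) x)
    -- the dressing equation for C, entrywise
    (hC : ∀ α γ ν x, pd n (C α γ ν) x + g α γ ν * C α γ ν x
        - B α * pd 0 (C α γ ν) x = 0)
    -- the spectral equation for U, pointwise in ν
    (hU : ∀ γ β ν x, pd n (U γ β ν) x - pd 0 (U γ β ν) x * B β
        + (∑ δ, U γ δ ν x * (B δ * u δ β x - u δ β x * B β)) - G γ β ν x = 0) :
    -- conclusion: the N-wave-type equation for u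
    ∀ α β x,
      pd n (u α β) x - pd 0 (u α β) x * B β
        + (∑ δ, u α δ x * (B δ * u δ β x - u δ β x * B β))
      = (B α * u1 α β x - u1 α β x * B β)
        - (∫ ν, ∑ γ, C α γ ν x * g α γ ν * U γ β ν x)
        + ∫ ν, ∑ γ, C α γ ν x * G γ β ν x := by
  intro α β x
  let C' ν y : Matrix (Fin Q) (Fin Q) ℂ := .of fun i j => C i j ν y
  let U' ν y : Matrix (Fin Q) (Fin Q) ℂ := .of fun i j => U i j ν y
  let u' y : Matrix (Fin Q) (Fin Q) ℂ := .of fun i j => u i j y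
  have hderiv (k : Fin (M + 2)) : HasEntryIntegral volume
      (fun ν => entryDeriv (Pi.single k 1) (fun y => C' ν y * U' ν y) x)
      (entryDeriv (Pi.single k 1) u' x) :=
    hasEntryIntegral_entryDeriv_mul (fun ν i j => hCd i j ν x) (fun ν i j => hUd i j ν x)
      (hiCU k · · x) (hiCU' k · · x) (hswap k · · x)
  have hdressing (ν i j) :
      pd n (C i j ν) x + C i j ν x * g i j ν - B i * pd 0 (C i j ν) x = 0 :=
    mul_comm (g i j ν) _ ▸ hC i j ν x
  exact nwave_diagonal_iff.1 (stmt6_general (C := C') (U := U') (u := u')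
    (fun ν i j => hCd i j ν x) (fun ν i j => hUd i j ν x)
    (fun i j => ⟨hiu i j x, (hu i j x).symm⟩) (fun i j => ⟨hiu1 i j x, (hu1 i j x).symm⟩)
    (.of_integrable (hig · · x)) (.of_integrable (hiG · · x)) (hderiv n) (hderiv 0)
    (fun ν => dressing_diagonal_iff.2 (hdressing ν))
    (fun ν => spectral_diagonal_iff.2 (hU · · ν x))) α β
end

section
/- Fix indices α ≠ β in {1,…,Q}, real constants B^i_γ (2 ≤ i ≤ M, 1 ≤ γ ≤ Q), and complex constants S^i_{αβ} satisfying Σ_{i=2}^{M} S^i_{αβ}(B^i_α − B^i_β) = 0. Let Û : ℝ × ℝ^M → M_Q(ℂ) be differentiable, set G¹_γ(λ_1;x) = exp( λ_1 (x_1 + Σ_{i=2}^{M} B^i_γ x_i) ), and define u_{γδ}(x) = ∫_ℝ G¹_γ(λ_1;x) Û_{γδ}(λ_1;x) dλ_1 for all γ, δ. Assume all the integrals ∫_ℝ G¹_γ Û_{γδ} dλ_1, ∫_ℝ λ_1 G¹_γ Û_{γδ} dλ_1, ∫_ℝ G¹_γ ∂_{x_k}Û_{γδ} dλ_1 converge absolutely,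 and that ∂_{x_k}u_{γδ} = ∫_ℝ ∂_{x_k}( G¹_γ Û_{γδ} ) dλ_1 for every k. Assume that for every λ_1 ∈ ℝ and x, Σ_{i=2}^{M} S^i_{αβ} ( ∂_{x_i}Û_{αβ} − B^i_β ∂_{x_1}Û_{αβ} + Σ_{γ=1}^{Q} Û_{αγ} u_{γβ}(B^i_γ − B^i_β) − λ_1 Û_{αβ}(B^i_α − B^i_β) ) = 0. Then u satisfies the nonlinear N-wave-type equation Σ_{i=2}^{M} S^i_{αβ} ( ∂_{x_i}u_{αβ} − B^i_β ∂_{x_1}u_{αβ} + Σ_{γ ≠ α, γ ≠ β} u_{αγ} u_{γβ} (B^i_γ − B^i_β) ) = 0. -/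
open MeasureTheory Finset

/-!
Multiplication by `G¹` turns `∂_k Û` into `∂_k (G¹ Û)` up to a multiple of `λ₁ G¹ Û`. In the
combination `∂_i - B^i_β ∂_1` that multiple is `B^i_α - B^i_β`, the same as for the explicit
`λ₁`-term, so both vanish after summation against `S^i`. The product `G¹ Û` thus satisfies a linear
equation whose coefficients, for fixed `x`, do not involve `λ₁`, and this equation can be
integrated. In the resulting equation for `u` the `γ = β` term is zero, and the `γ = α` term is
again a multiple of `B^i_α - B^i_β`.
-/

section PartialDerivative

variable {n : ℕ} {k : Fin n} {x : Fin n → ℝ}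

lemma pd_mul {f g : (Fin n → ℝ) → ℂ} (hf : DifferentiableAt ℝ f x)
    (hg : DifferentiableAt ℝ g x) :
    pd k (fun y => f y * g y) x = f x * pd k g x + pd k f x * g x := by
  simp [pd, fderiv_fun_mul hf hg, mul_comm (g x)]

lemma pd_cexp_clm (φ : (Fin n → ℝ) →L[ℝ] ℂ) :
    pd k (fun y => Complex.exp (φ y)) x = φ (Pi.single k 1) * Complex.exp (φ x) := by
  simp [pd, φ.hasFDerivAt.cexp.fderiv, mul_comm]

lemma integrable_pd_mul {Λ : Type*} [MeasurableSpace Λ] {μ : Measure Λ}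
    {G U : Λ → (Fin n → ℝ) → ℂ} (hG : ∀ t, DifferentiableAt ℝ (G t) x)
    (hU : ∀ t, DifferentiableAt ℝ (U t) x)
    (hGU' : Integrable (fun t => G t x * pd k (U t) x) μ)
    (hG'U : Integrable (fun t => pd k (G t) x * U t x) μ) :
    Integrable (fun t => pd k (fun y => G t y * U t y) x) μ := by
  simp only [pd_mul (hG _) (hU _)]
  exact hGU'.add hG'U

end PartialDerivative

section SpectralExp

variable {n : ℕ} [NeZero n]

/-- The phase `x_1 + ∑_{i ≥ 2} b^i x_i` of the exponential `G¹`, as a continuous linear map;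
the index `0` stands for `x_1`. -/
noncomputable def spectralPhase (b : Fin n → ℂ) : (Fin n → ℝ) →L[ℝ] ℂ :=
  Complex.ofRealCLM ∘L .proj 0 +
    ∑ i ∈ univ.filter (fun i => i ≠ 0), b i • (Complex.ofRealCLM ∘L .proj i)

lemma spectralPhase_apply (b : Fin n → ℂ) (x : Fin n → ℝ) :
    spectralPhase b x = x 0 + ∑ i ∈ univ.filter (fun i => i ≠ 0), b i * x i := by
  simp [spectralPhase]

lemma spectralPhase_single_zero (b : Fin n → ℂ) :
    spectralPhase b (Pi.single 0 1) = 1 := by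
  rw [spectralPhase_apply, sum_eq_zero] <;> simp +contextual

lemma spectralPhase_single_of_ne_zero (b : Fin n → ℂ) {k : Fin n} (hk : k ≠ 0) :
    spectralPhase b (Pi.single k 1) = b k := by
  rw [spectralPhase_apply, sum_eq_single_of_mem k (by simpa using hk)]
  · simp [hk.symm]
  · simp +contextual

/-- The exponential `G¹(λ; x) = exp (λ (x_1 + ∑_{i ≥ 2} b^i x_i))` with arbitrary complex
parameters `λ` and `b^i`. -/
noncomputable def spectralExp (b : Fin n → ℂ) (l : ℂ) (x : Fin n → ℝ) : ℂ :=
  Complex.exp (l * (x 0 + ∑ i ∈ univ.filter (fun i => i ≠ 0), b i * x i))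

lemma spectralExp_eq (b : Fin n → ℂ) (l : ℂ) :
    spectralExp b l = fun x => Complex.exp ((l • spectralPhase b) x) := by
  ext x
  simp [spectralExp, spectralPhase_apply]

lemma differentiable_spectralExp (b : Fin n → ℂ) (l : ℂ) :
    Differentiable ℝ (spectralExp b l) := by
  rw [spectralExp_eq]
  fun_prop

lemma pd_zero_spectralExp (b : Fin n → ℂ) (l : ℂ) (x : Fin n → ℝ) :
    pd 0 (spectralExp b l) x = l * spectralExp b l x := by
  rw [spectralExp_eq, pd_cexp_clm]
  simp [spectralPhase_single_zero]

lemma pd_spectralExp_of_ne_zero (b : Fin n → ℂ) (l : ℂ) {k : Fin n} (hk : k ≠ 0)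
    (x : Fin n → ℝ) : pd k (spectralExp b l) x = l * b k * spectralExp b l x := by
  rw [spectralExp_eq, pd_cexp_clm]
  simp [spectralPhase_single_of_ne_zero b hk]

end SpectralExp

section LinearCombination

variable {ι κ R : Type*}

lemma sum_mul_add_mul_of_sum_mul_eq_zero [CommSemiring R] {s : Finset ι} {S d : ι → R}
    (hS : ∑ i ∈ s, S i * d i = 0) (a : ι → R) (c : R) :
    ∑ i ∈ s, S i * (a i + c * d i) = ∑ i ∈ s, S i * a i := by
  simp only [mul_add, mul_left_comm _ c, sum_add_distrib, ← mul_sum, hS, mul_zero, add_zero]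

lemma sum_eq_sum_filter_ne_and_ne_add [Fintype κ] [DecidableEq κ] [AddCommMonoid R]
    {f : κ → R} (α : κ) {β : κ} (hβ : f β = 0) :
    ∑ γ, f γ = ∑ γ ∈ univ.filter (fun γ => γ ≠ α ∧ γ ≠ β), f γ + f α := by
  rw [← sum_erase_add _ _ (mem_univ α), ← filter_filter, filter_ne', filter_ne', sum_erase _ hβ]

lemma sum_mul_add_sum_filter_ne_and_ne [CommSemiring R] [Fintype κ] [DecidableEq κ]
    {s : Finset ι} {S : ι → R} {e : ι → κ → R} {α β : κ} (hα : ∑ i ∈ s, S i * e i α = 0)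
    (hβ : ∀ i, e i β = 0) (a : ι → R) (c : κ → R) :
    ∑ i ∈ s, S i * (a i + ∑ γ ∈ univ.filter (fun γ => γ ≠ α ∧ γ ≠ β), c γ * e i γ) =
      ∑ i ∈ s, S i * (a i + ∑ γ, c γ * e i γ) := by
  rw [← sum_mul_add_mul_of_sum_mul_eq_zero hα _ (c α)]
  refine sum_congr rfl fun i _ => ?_
  rw [sum_eq_sum_filter_ne_and_ne_add α (β := β) (by rw [hβ, mul_zero]), add_assoc]

lemma integral_sum_mul_sub_add_sum [RCLike R] [Fintype κ] {Λ : Type*} [MeasurableSpace Λ]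
    {μ : Measure Λ} {s : Finset ι} {f : ι → Λ → R} {g : Λ → R} {h : κ → Λ → R}
    (hf : ∀ i, Integrable (f i) μ) (hg : Integrable g μ) (hh : ∀ γ, Integrable (h γ) μ)
    (S b : ι → R) (w : κ → R) (e : ι → κ → R) :
    ∫ t, ∑ i ∈ s, S i * (f i t - b i * g t + ∑ γ, h γ t * w γ * e i γ) ∂μ =
      ∑ i ∈ s, S i * (∫ t, f i t ∂μ - b i * ∫ t, g t ∂μ
        + ∑ γ, (∫ t, h γ t ∂μ) * w γ * e i γ) := by
  have h_lin : ∀ i, Integrable (fun t => f i t - b i * g t) μ :=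
    fun i => (hf i).sub (hg.const_mul _)
  have h_term : ∀ i γ, Integrable (fun t => h γ t * w γ * e i γ) μ :=
    fun i γ => ((hh γ).mul_const _).mul_const _
  have h_quad : ∀ i, Integrable (fun t => ∑ γ, h γ t * w γ * e i γ) μ :=
    fun i => integrable_finsetSum _ fun γ _ => h_term i γ
  have h_summand : ∀ i, Integrable
      (fun t => S i * (f i t - b i * g t + ∑ γ, h γ t * w γ * e i γ)) μ :=
    fun i => ((h_lin i).add (h_quad i)).const_mul _
  rw [integral_finsetSum _ fun i _ => h_summand i]
  refine sum_congr rfl fun i _ => ?_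
  rw [integral_const_mul, integral_add (h_lin i) (h_quad i), integral_sub (hf i) (hg.const_mul _),
    integral_const_mul, integral_finsetSum _ fun γ _ => h_term i γ]
  simp only [integral_mul_const]

end LinearCombination

section NWave

variable {n : ℕ} [NeZero n] {κ : Type*} [Fintype κ] {α β : κ} {B : Fin n → κ → ℂ} {S : Fin n → ℂ}

lemma sum_mul_pd_mul_eq_zero
    (hS : ∑ i ∈ univ.filter (fun i => i ≠ 0), S i * (B i α - B i β) = 0)
    {x : Fin n → ℝ} {l : ℂ} {G : (Fin n → ℝ) → ℂ} (hG : DifferentiableAt ℝ G x)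
    (hG_zero : pd 0 G x = l * G x) (hG_ne : ∀ i ≠ 0, pd i G x = l * B i α * G x)
    {U : κ → (Fin n → ℝ) → ℂ} (hU : DifferentiableAt ℝ (U β) x) (w : κ → ℂ)
    (hspec : ∑ i ∈ univ.filter (fun i => i ≠ 0),
      S i * (pd i (U β) x - B i β * pd 0 (U β) x + (∑ γ, U γ x * w γ * (B i γ - B i β))
        - l * U β x * (B i α - B i β)) = 0) :
    ∑ i ∈ univ.filter (fun i => i ≠ 0),
      S i * (pd i (fun y => G y * U β y) x - B i β * pd 0 (fun y => G y * U β y) x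
        + ∑ γ, G x * U γ x * w γ * (B i γ - B i β)) = 0 := by
  rw [← mul_zero (G x), ← hspec, mul_sum,
    ← sum_mul_add_mul_of_sum_mul_eq_zero hS _ (-2 * (l * G x * U β x))]
  refine sum_congr rfl fun i hi => ?_
  rw [pd_mul hG hU, pd_mul hG hU, hG_zero, hG_ne i (mem_filter.mp hi).2]
  simp only [mul_assoc, ← mul_sum]
  ring

end NWave

theorem stmt8_general {n : ℕ} [NeZero n] {κ : Type*} [Fintype κ] [DecidableEq κ]
    {Λ : Type*} [MeasurableSpace Λ] {μ : Measure Λ} {α β : κ}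
    {B : Fin n → κ → ℂ} {S : Fin n → ℂ}
    (hS : ∑ i ∈ univ.filter (fun i => i ≠ 0), S i * (B i α - B i β) = 0)
    {x : Fin n → ℝ} {l : Λ → ℂ} {G : Λ → (Fin n → ℝ) → ℂ}
    (hG : ∀ t, DifferentiableAt ℝ (G t) x)
    (hG_zero : ∀ t, pd 0 (G t) x = l t * G t x)
    (hG_ne : ∀ t, ∀ i ≠ 0, pd i (G t) x = l t * B i α * G t x)
    {U : Λ → κ → κ → (Fin n → ℝ) → ℂ} (hU : ∀ t, DifferentiableAt ℝ (U t α β) x)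
    {u : κ → κ → (Fin n → ℝ) → ℂ} (hu : ∀ γ y, u α γ y = ∫ t, G t y * U t α γ y ∂μ)
    (hGU : ∀ γ, Integrable (fun t => G t x * U t α γ x) μ)
    (hlGU : Integrable (fun t => l t * G t x * U t α β x) μ)
    (hGU' : ∀ k, Integrable (fun t => G t x * pd k (U t α β) x) μ)
    (hu' : ∀ k, pd k (u α β) x = ∫ t, pd k (fun y => G t y * U t α β y) x ∂μ)
    (hspec : ∀ᵐ t ∂μ, ∑ i ∈ univ.filter (fun i => i ≠ 0),
      S i * (pd i (U t α β) x - B i β * pd 0 (U t α β) x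
        + (∑ γ, U t α γ x * u γ β x * (B i γ - B i β))
        - l t * U t α β x * (B i α - B i β)) = 0) :
    ∑ i ∈ univ.filter (fun i => i ≠ 0),
      S i * (pd i (u α β) x - B i β * pd 0 (u α β) x
        + ∑ γ ∈ univ.filter (fun γ => γ ≠ α ∧ γ ≠ β),
            u α γ x * u γ β x * (B i γ - B i β)) = 0 := by
  have hD : ∀ k, Integrable (fun t => pd k (fun y => G t y * U t α β y) x) μ := by
    refine fun k => integrable_pd_mul hG hU (hGU' k) ?_
    rcases eq_or_ne k 0 with rfl | hk
    · simpa only [hG_zero] using hlGU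
    · simpa only [hG_ne _ k hk, mul_assoc, mul_left_comm _ (B k α)] using hlGU.const_mul (B k α)
  have h_dressed : ∀ᵐ t ∂μ, ∑ i ∈ univ.filter (fun i => i ≠ 0),
      S i * (pd i (fun y => G t y * U t α β y) x - B i β * pd 0 (fun y => G t y * U t α β y) x
        + ∑ γ, G t x * U t α γ x * u γ β x * (B i γ - B i β)) = 0 :=
    hspec.mono fun t => sum_mul_pd_mul_eq_zero hS (hG t) (hG_zero t) (hG_ne t) (hU t) (u · β x)
  rw [sum_mul_add_sum_filter_ne_and_ne (e := fun i γ => B i γ - B i β) hS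
    (fun i => sub_self (B i β)) _ (fun γ => u α γ x * u γ β x)]
  simp only [hu', hu]
  rw [← integral_sum_mul_sub_add_sum hD (hD 0) hGU]
  exact integral_eq_zero_of_ae h_dressed

/-- the single linear spectral equation for `Û`, multiplied by `G¹`
and integrated over the spectral parameter `λ_1 ∈ ℝ`, produces the
multidimensional nonlinear `N`-wave equation for the field `u`.  Coordinates are
indexed by `Fin (M+2)` (index `0` is `x_1`, indices `i ≠ 0` are `x_i`,
`2 ≤ i ≤ M`); `Uh t γ δ x = Û_{γδ}(λ_1;x)` with `t = λ_1`. -/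
theorem stmt8 {M Q : ℕ} (α β : Fin Q) (hαβ : α ≠ β)
    (B : Fin (M + 2) → Fin Q → ℝ) (S : Fin (M + 2) → ℂ)
    (hS : ∑ i ∈ Finset.univ.filter (fun i => i ≠ (0 : Fin (M + 2))),
      S i * ((B i α : ℂ) - (B i β : ℂ)) = 0)
    (Uh : ℝ → Fin Q → Fin Q → (Fin (M + 2) → ℝ) → ℂ)
    (hUd : ∀ γ δ, Differentiable ℝ
      (fun p : ℝ × (Fin (M + 2) → ℝ) => Uh p.1 γ δ p.2))
    (G1 : Fin Q → ℝ → (Fin (M + 2) → ℝ) → ℂ)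
    (hG1 : G1 = fun (γ : Fin Q) (t : ℝ) (x : Fin (M + 2) → ℝ) => Complex.exp ((t : ℂ) * ((x 0 : ℂ)
        + ∑ i ∈ Finset.univ.filter (fun i => i ≠ (0 : Fin (M + 2))),
            (B i γ : ℂ) * (x i : ℂ))))
    (u : Fin Q → Fin Q → (Fin (M + 2) → ℝ) → ℂ)
    (hu : ∀ γ δ x, u γ δ x = ∫ t : ℝ, G1 γ t x * Uh t γ δ x)
    -- absolute convergence of the integrals
    (hint1 : ∀ γ δ x, Integrable fun t : ℝ => G1 γ t x * Uh t γ δ x)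
    (hint2 : ∀ γ δ x, Integrable fun t : ℝ => (t : ℂ) * G1 γ t x * Uh t γ δ x)
    (hint3 : ∀ (k : Fin (M + 2)) γ δ x,
      Integrable fun t : ℝ => G1 γ t x * pd k (Uh t γ δ) x)
    -- derivatives of u may be computed under the integral sign
    (hswap : ∀ (k : Fin (M + 2)) γ δ x,
      pd k (u γ δ) x = ∫ t : ℝ, pd k (fun y => G1 γ t y * Uh t γ δ y) x)
    -- the single linear spectral equation, for every λ_1 and x
    (hspec : ∀ (t : ℝ) x,
      ∑ i ∈ Finset.univ.filter (fun i => i ≠ (0 : Fin (M + 2))),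
        S i * (pd i (Uh t α β) x - (B i β : ℂ) * pd 0 (Uh t α β) x
          + (∑ γ, Uh t α γ x * u γ β x * ((B i γ : ℂ) - (B i β : ℂ)))
          - (t : ℂ) * Uh t α β x * ((B i α : ℂ) - (B i β : ℂ))) = 0) :
    -- conclusion: the nonlinear N-wave-type equation for u
    ∀ x, ∑ i ∈ Finset.univ.filter (fun i => i ≠ (0 : Fin (M + 2))),
      S i * (pd i (u α β) x - (B i β : ℂ) * pd 0 (u α β) x
        + ∑ γ ∈ Finset.univ.filter (fun γ => γ ≠ α ∧ γ ≠ β),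
            u α γ x * u γ β x * ((B i γ : ℂ) - (B i β : ℂ))) = 0 := by
  subst hG1
  exact fun x => stmt8_general (B := fun i γ => B i γ) hS
    (l := fun t : ℝ => t) (G := fun t : ℝ => spectralExp (fun i => B i α) t) (U := Uh)
    (fun t => differentiable_spectralExp (fun i => B i α) t x)
    (fun t => pd_zero_spectralExp _ t x) (fun t i hi => pd_spectralExp_of_ne_zero _ t hi x)
    (fun t => (hUd α β).comp ((differentiable_const t).prodMk differentiable_id) x) (hu α)
    (hint1 α · x) (hint2 α β x) (hint3 · α β x) (hswap · α β x) (.of_forall (hspec · x))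
end

section
/- Fix spectral parameters λ, μ ∈ ℝ^{M+1} with λ_2 + μ_1 ≠ 0, a constant σ_α ∈ {1,−1}, and complex constants h^j_α, g^j_{αβ} (2 ≤ j ≤ M), C^0_{αβ}. Define Φ_α(x) = exp( λ_2 (x_1 + x_2 σ_α) + x_M λ_2² σ_α − Σ_{j=2}^{M} h^j_α x_j ), C_{αβ}(x) = exp( μ_1 (x_1 + x_2 σ_α) − x_M μ_1² σ_α − Σ_{j=2}^{M} g^j_{αβ} x_j ) C^0_{αβ}, and Ψ_{αβ}(x) = Φ_α(x) C_{αβ}(x) / (λ_2 + μ_1). Then Ψ_{αβ} satisfies: ∂_{x_1}Ψ_{αβ} = Φ_α C_{αβ}; ∂_{x_2}Ψ_{αβ} + (h²_α + g²_{αβ}) Ψ_{αβ} = Φ_α σ_α C_{αβ}; ∂_{x_n}Ψ_{αβ} + (h^n_α + g^n_{αβ}) Ψ_{αβ} = 0 for 2 < n < M; and ∂_{x_M}Ψ_{αβ} + (h^M_α + g^M_{αβ}) Ψ_{αβ} = (∂_{x_1}Φ_α) σ_α C_{αβ} − Φ_α σ_α ∂_{x_1}C_{αβ}. -/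
open MeasureTheory Finset

/-! `Φ`, `C` and `Ψ` are all plane waves `A exp (∑ⱼ cⱼ xⱼ)`, on which `∂ₖ` acts as multiplication by
`cₖ`, and the wave vector of `Ψ` is the sum of those of `Φ` and `C`. Since `Φ C = (λ₂ + μ₁) Ψ`, each
equation of the system reduces to a scalar identity between wave vector components; the one for
`x_M` is `(λ₂² - μ₁²) σ = (λ₂ - μ₁) σ (λ₂ + μ₁)`. -/

theorem update_zero_dotProduct {ι R : Type*} [Fintype ι] [DecidableEq ι]
    [NonUnitalNonAssocSemiring R] (v w : ι → R) (i : ι) :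
    Function.update v i 0 ⬝ᵥ w = ∑ j ∈ univ.filter (fun j => j ≠ i), v j * w j := by
  simp [dotProduct, sum_filter, Function.update_apply, ite_mul]

theorem hasFDerivAt_dotProduct_ofReal {ι : Type*} [Fintype ι] (c : ι → ℂ) (x : ι → ℝ) :
    HasFDerivAt (fun y : ι → ℝ => c ⬝ᵥ fun j => (y j : ℂ))
      (∑ j, c j • Complex.ofRealCLM.comp (ContinuousLinearMap.proj (R := ℝ) j)) x :=
  HasFDerivAt.fun_sum fun j _ =>
    (Complex.ofRealCLM.hasFDerivAt.comp x (hasFDerivAt_apply j x)).const_mul (c j)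

section PlaneWave

variable {ι : Type*} [Fintype ι] {N : ℕ}

/-- The plane wave on `ℝ^ι` with amplitude `A` and wave vector `c`. No factor `i` is included, so
the components of `c` are the eigenvalues of the partial derivatives. -/
noncomputable def planeWave (A : ℂ) (c : ι → ℂ) (x : ι → ℝ) : ℂ :=
  A * Complex.exp (c ⬝ᵥ fun j => (x j : ℂ))

theorem planeWave_mul_planeWave (A B : ℂ) (a b : ι → ℂ) (x : ι → ℝ) :
    planeWave A a x * planeWave B b x = planeWave (A * B) (a + b) x := by
  simp only [planeWave, add_dotProduct, Complex.exp_add]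
  ring

theorem planeWave_div (A r : ℂ) (c : ι → ℂ) (x : ι → ℝ) :
    planeWave A c x / r = planeWave (A / r) c x :=
  mul_div_right_comm _ _ _

theorem pd_planeWave (A : ℂ) (c : Fin N → ℂ) (k : Fin N) (x : Fin N → ℝ) :
    pd k (planeWave A c) x = c k * planeWave A c x := by
  have hderiv := (hasFDerivAt_dotProduct_ofReal c x).cexp.const_mul A
  have hpd : pd k (planeWave A c) x = A * (Complex.exp (c ⬝ᵥ fun j => (x j : ℂ)) * c k) := by
    rw [pd, HasFDerivAt.fderiv (f := planeWave A c) hderiv]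
    simp [Pi.single_apply, apply_ite Complex.ofReal]
  rw [hpd, planeWave]
  ring

theorem pd_planeWave_mul_planeWave_div (A B r : ℂ) (a b : Fin N → ℂ) (k : Fin N)
    (x : Fin N → ℝ) :
    pd k (fun y => planeWave A a y * planeWave B b y / r) x =
      (a k + b k) * (planeWave A a x * planeWave B b x / r) := by
  simp only [planeWave_mul_planeWave, planeWave_div]
  exact pd_planeWave _ (a + b) k x

end PlaneWave

section DressingWaveVector

variable {M : ℕ} (l q σ : ℂ) (h : Fin (M + 3) → ℂ)

/-- The wave vector common to the two factors of the dressing kernel: the coefficients of the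
exponent `l (x₁ + x₂ σ) + q x_M - ∑_{j ≥ 2} hʲ xⱼ`. The factor `Φ` has `l = λ₂`, `q = λ₂² σ`, and
the factor `C` has `l = μ₁`, `q = -μ₁² σ` and `gʲ` in place of `hʲ`. -/
noncomputable def dressingWaveVector : Fin (M + 3) → ℂ :=
  Pi.single 0 l + Pi.single 1 (l * σ) + Pi.single (Fin.last (M + 2)) q - Function.update h 0 0

theorem dressingWaveVector_zero : dressingWaveVector l q σ h 0 = l := by
  simp [dressingWaveVector, Fin.ext_iff]

theorem dressingWaveVector_one : dressingWaveVector l q σ h 1 = l * σ - h 1 := by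
  simp [dressingWaveVector, Fin.ext_iff]

theorem dressingWaveVector_last :
    dressingWaveVector l q σ h (Fin.last (M + 2)) = q - h (Fin.last (M + 2)) := by
  simp [dressingWaveVector, Fin.ext_iff]

theorem dressingWaveVector_of_ne {n : Fin (M + 3)} (h₀ : n ≠ 0) (h₁ : n ≠ 1)
    (hlast : n ≠ Fin.last (M + 2)) : dressingWaveVector l q σ h n = -h n := by
  simp [dressingWaveVector, h₀, h₁, hlast]

theorem dressingWaveVector_dotProduct (y : Fin (M + 3) → ℂ) :
    dressingWaveVector l q σ h ⬝ᵥ y =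
      l * (y 0 + y 1 * σ) + y (Fin.last (M + 2)) * q
        - ∑ j ∈ univ.filter (fun j => j ≠ (0 : Fin (M + 3))), h j * y j := by
  simp only [dressingWaveVector, sub_dotProduct, add_dotProduct, single_dotProduct,
    update_zero_dotProduct]
  ring

end DressingWaveVector

theorem stmt15_general {M : ℕ} {l m : ℂ} (hlm : l + m ≠ 0) (σ : ℂ)
    (h g : Fin (M + 3) → ℂ) (C0 : ℂ)
    (Φ C Ψ : (Fin (M + 3) → ℝ) → ℂ)
    (hΦ : Φ = fun x => Complex.exp (l * ((x 0 : ℂ) + (x 1 : ℂ) * σ)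
        + (x (Fin.last (M + 2)) : ℂ) * l ^ 2 * σ
        - ∑ j ∈ Finset.univ.filter (fun j => j ≠ (0 : Fin (M + 3))),
            h j * (x j : ℂ)))
    (hC : C = fun x => Complex.exp (m * ((x 0 : ℂ) + (x 1 : ℂ) * σ)
        - (x (Fin.last (M + 2)) : ℂ) * m ^ 2 * σ
        - ∑ j ∈ Finset.univ.filter (fun j => j ≠ (0 : Fin (M + 3))),
            g j * (x j : ℂ)) * C0)
    (hΨ : Ψ = fun x => Φ x * C x / (l + m)) :
    (∀ x, pd 0 Ψ x = Φ x * C x) ∧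
    (∀ x, pd 1 Ψ x + (h 1 + g 1) * Ψ x = Φ x * σ * C x) ∧
    (∀ n : Fin (M + 3), n ≠ 0 → n ≠ 1 → n ≠ Fin.last (M + 2) →
      ∀ x, pd n Ψ x + (h n + g n) * Ψ x = 0) ∧
    (∀ x, pd (Fin.last (M + 2)) Ψ x
        + (h (Fin.last (M + 2)) + g (Fin.last (M + 2))) * Ψ x
      = pd 0 Φ x * σ * C x - Φ x * σ * pd 0 C x) := by
  have hΦ_wave : Φ = planeWave 1 (dressingWaveVector l (l ^ 2 * σ) σ h) := by
    ext x
    simp only [hΦ, planeWave, dressingWaveVector_dotProduct, one_mul, mul_assoc]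
  have hC_wave : C = planeWave C0 (dressingWaveVector m (-(m ^ 2 * σ)) σ g) := by
    ext x
    simp only [hC, planeWave, dressingWaveVector_dotProduct, mul_comm C0, mul_neg,
      ← sub_eq_add_neg, mul_assoc]
  have hΦC (x) : Φ x * C x = (l + m) * Ψ x := by rw [hΨ, mul_div_cancel₀ _ hlm]
  have pdΦ (x) : pd 0 Φ x = l * Φ x := by
    rw [hΦ_wave, pd_planeWave, dressingWaveVector_zero]
  have pdC (x) : pd 0 C x = m * C x := by
    rw [hC_wave, pd_planeWave, dressingWaveVector_zero]
  have pdΨ (k x) : pd k Ψ x = (dressingWaveVector l (l ^ 2 * σ) σ h k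
      + dressingWaveVector m (-(m ^ 2 * σ)) σ g k) * Ψ x := by
    rw [hΨ, hΦ_wave, hC_wave, pd_planeWave_mul_planeWave_div]
  refine ⟨fun x => ?_, fun x => ?_, fun n h₀ h₁ hlast x => ?_, fun x => ?_⟩
  · rw [pdΨ, hΦC, dressingWaveVector_zero, dressingWaveVector_zero]
  · rw [pdΨ, dressingWaveVector_one, dressingWaveVector_one]
    linear_combination -σ * hΦC x
  · rw [pdΨ, dressingWaveVector_of_ne _ _ _ _ h₀ h₁ hlast,
      dressingWaveVector_of_ne _ _ _ _ h₀ h₁ hlast]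
    ring
  · rw [pdΨ, pdΦ, pdC, dressingWaveVector_last, dressingWaveVector_last]
    linear_combination -((l - m) * σ) * hΦC x

/-- the explicit particular solution
`Ψ_{αβ} = Φ_α C_{αβ}/(λ_2+μ_1)` of the nonhomogeneous system defining the
dressing kernel in the Davey–Stewartson construction.  Coordinates are indexed
by `Fin (M+3)` (index `0` is `x_1`, index `1` is `x_2`, index `Fin.last (M+2)`
is `x_M`); the spectral parameters `λ, μ ∈ ℝ^{M+1}` are
`lam, mu : Fin (M+4) → ℝ` with `λ_2 = lam 1`, `μ_1 = mu 0`; `σa ∈ {1,−1}` is a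
diagonal entry of `B² = diag(1,−1)`. -/
theorem stmt15 {M : ℕ} (lam mu : Fin (M + 4) → ℝ) (hlm : lam 1 + mu 0 ≠ 0)
    (σa : ℂ) (hσ : σa = 1 ∨ σa = -1)
    (h g : Fin (M + 3) → ℂ) (C0 : ℂ)
    (Φ C Ψ : (Fin (M + 3) → ℝ) → ℂ)
    (hΦ : Φ = fun x => Complex.exp ((lam 1 : ℂ) * ((x 0 : ℂ) + (x 1 : ℂ) * σa)
        + (x (Fin.last (M + 2)) : ℂ) * (lam 1 : ℂ) ^ 2 * σa
        - ∑ j ∈ Finset.univ.filter (fun j => j ≠ (0 : Fin (M + 3))),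
            h j * (x j : ℂ)))
    (hC : C = fun x => Complex.exp ((mu 0 : ℂ) * ((x 0 : ℂ) + (x 1 : ℂ) * σa)
        - (x (Fin.last (M + 2)) : ℂ) * (mu 0 : ℂ) ^ 2 * σa
        - ∑ j ∈ Finset.univ.filter (fun j => j ≠ (0 : Fin (M + 3))),
            g j * (x j : ℂ)) * C0)
    (hΨ : Ψ = fun x => Φ x * C x / ((lam 1 : ℂ) + (mu 0 : ℂ))) :
    (∀ x, pd 0 Ψ x = Φ x * C x) ∧
    (∀ x, pd 1 Ψ x + (h 1 + g 1) * Ψ x = Φ x * σa * C x) ∧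
    (∀ n : Fin (M + 3), n ≠ 0 → n ≠ 1 → n ≠ Fin.last (M + 2) →
      ∀ x, pd n Ψ x + (h n + g n) * Ψ x = 0) ∧
    (∀ x, pd (Fin.last (M + 2)) Ψ x
        + (h (Fin.last (M + 2)) + g (Fin.last (M + 2))) * Ψ x
      = pd 0 Φ x * σa * C x - Φ x * σa * pd 0 C x) :=
  stmt15_general (mod_cast hlm) σa h g C0 Φ C Ψ hΦ hC hΨ
end
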